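/- arXiv:2202.10703 — 2 statements merged into one kernel-verified Lean document; each statement's English description precedes it below -/
import Mathlib

section
/- There exist constants δ₀ > 0 and γ₁ > 0 such that for every Q ∈ Sym₀ with dist(Q, 𝒩) ≤ δ₀ one has f(Q) ≥ γ₁ · dist(Q, 𝒩)². -/
/- STATEMENT 1: There exist δ₀ > 0 and γ₁ > 0 such that for every Q ∈ Sym₀ with
dist(Q, 𝒩) ≤ δ₀ one has f(Q) ≥ γ₁ · dist(Q, 𝒩)². -/

noncomputable section

open Matrix

abbrev Mat3 : Type := Matrix (Fin 3) (Fin 3) ℝ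

def Sym0 : Set Mat3 := {Q | Q.IsSymm ∧ Q.trace = 0}

def unitVec (n : Fin 3 → ℝ) : Prop := ∑ i, (n i) ^ 2 = 1

def uniax (s : ℝ) (n : Fin 3 → ℝ) : Mat3 :=
  s • (Matrix.vecMulVec n n - (1 / 3 : ℝ) • (1 : Mat3))

def sStar (a b c : ℝ) : ℝ := (b + Real.sqrt (b ^ 2 + 24 * a * c)) / (4 * c)

def fLdG (a b c C : ℝ) (Q : Mat3) : ℝ :=
  C - a / 2 * (Q * Q).trace - b / 3 * (Q * Q * Q).trace + c / 4 * ((Q * Q).trace) ^ 2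

def NsetM (s : ℝ) : Set Mat3 := {Q | ∃ n, unitVec n ∧ Q = uniax s n}

/-- Frobenius norm. -/
def frob (A : Mat3) : ℝ := Real.sqrt (∑ i, ∑ j, (A i j) ^ 2)

/-- Frobenius distance from `Q` to 𝒩. -/
def distN (s : ℝ) (Q : Mat3) : ℝ := sInf {d | ∃ P ∈ NsetM s, d = frob (Q - P)}

/-!
Write a matrix `Q ∈ Sym₀` in terms of `ρ = √(3/2 tr Q²)` and `σ = 3/2 λ`, where `λ` is its largest
eigenvalue, with unit eigenvector `n`; the uniaxial state of order parameter `s ≥ 0` has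
`ρ = σ = s`. Since the eigenvalues sum to zero, `tr Q³` is a polynomial in `ρ` and `σ`, and

* `f(Q) = E(ρ) + (2b/27)(ρ - σ)(ρ + 2σ)²`, where `E` is the energy of uniaxial states;
* `|Q - s(n⊗n - I/3)|² = (2/3)((ρ - s)² + 2s(ρ - σ))`, which bounds `dist(Q, 𝒩)²` from above.

At `s = s*` the function `E` is critical, so `E(ρ) - E(s)` is `(ρ - s)²` times a quadratic in `ρ`,
which is bounded below on `ρ ≥ 0` by a positive constant as soon as `b < 3cs`. As
`ρ/2 ≤ σ ≤ ρ`, comparing the two formulas gives `f ≥ γ dist(·, 𝒩)²` on all of `Sym₀`. The condition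
`b < 3cs` amounts to `b² + 27ac > 0`: the uniaxial minimum lies strictly below the isotropic
state `Q = 0`.
-/

section TraceOfPowers

variable {𝕜 n : Type*} [RCLike 𝕜] [Fintype n] [DecidableEq n] {A : Matrix n n 𝕜}

lemma trace_pow_eq_sum_eigenvalues_pow (hA : A.IsHermitian) (k : ℕ) :
    (A ^ k).trace = ∑ i, (hA.eigenvalues i : 𝕜) ^ k := by
  conv_lhs => rw [hA.spectral_theorem, ← map_pow, diagonal_pow, Unitary.conjStarAlgAut_apply,
    trace_mul_cycle, Unitary.coe_star_mul_self, one_mul, trace_diagonal]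
  simp only [Pi.pow_apply, Function.comp_apply]

end TraceOfPowers

lemma sum_univ_three_eq_add_add {M : Type*} [AddCommMonoid M] (f : Fin 3 → M) (i : Fin 3) :
    ∑ j, f j = f i + f (i + 1) + f (i + 2) := by
  rw [← Equiv.sum_comp (Equiv.addLeft i) f, Fin.sum_univ_three]
  simp only [Equiv.coe_addLeft, add_zero]

section ZeroSumTriples

variable {l : Fin 3 → ℝ}

lemma sum_cube_eq_of_sum_eq_zero (hl : ∑ j, l j = 0) (i : Fin 3) :
    ∑ j, l j ^ 3 = 3 * l i ^ 3 - 3 / 2 * l i * ∑ j, l j ^ 2 := by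
  simp only [sum_univ_three_eq_add_add _ i] at hl ⊢
  rw [show l i = -l (i + 1) - l (i + 2) by linarith]
  ring

lemma three_mul_sq_le_two_mul_sum_sq (hl : ∑ j, l j = 0) (i : Fin 3) :
    3 * l i ^ 2 ≤ 2 * ∑ j, l j ^ 2 := by
  simp only [sum_univ_three_eq_add_add _ i] at hl ⊢
  rw [show l i = -l (i + 1) - l (i + 2) by linarith]
  linarith [sq_nonneg (l (i + 1) - l (i + 2))]

lemma sum_sq_le_six_mul_sq (hl : ∑ j, l j = 0) {i : Fin 3} (hi : ∀ j, l j ≤ l i) :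
    ∑ j, l j ^ 2 ≤ 6 * l i ^ 2 := by
  -- The difference of the two sides is twice this product.
  have hprod : 0 ≤ (l i - l (i + 1)) * (l i - l (i + 2)) :=
    mul_nonneg (sub_nonneg.2 (hi _)) (sub_nonneg.2 (hi _))
  simp only [sum_univ_three_eq_add_add _ i] at hl ⊢
  rw [show l i = -l (i + 1) - l (i + 2) by linarith] at hprod ⊢
  linarith

lemma nonneg_of_sum_eq_zero_of_forall_le (hl : ∑ j, l j = 0) {i : Fin 3} (hi : ∀ j, l j ≤ l i) :
    0 ≤ l i := by
  rw [sum_univ_three_eq_add_add _ i] at hl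
  linarith [hi (i + 1), hi (i + 2)]

end ZeroSumTriples

lemma unitVec_iff_dotProduct_self {n : Fin 3 → ℝ} : unitVec n ↔ n ⬝ᵥ n = 1 := by
  simp only [unitVec, dotProduct, sq]

lemma exists_leading_eigenvector {Q : Mat3} (hQ : Q ∈ Sym0) :
    ∃ n μ, unitVec n ∧ Q *ᵥ n = μ • n ∧ 0 ≤ μ ∧
      3 * μ ^ 2 ≤ 2 * (Q * Q).trace ∧ (Q * Q).trace ≤ 6 * μ ^ 2 ∧
      (Q * Q * Q).trace = 3 * μ ^ 3 - 3 / 2 * μ * (Q * Q).trace := by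
  have hH : Q.IsHermitian := by
    rw [Matrix.IsHermitian, conjTranspose_eq_transpose_of_trivial]; exact hQ.1
  have htrace (k : ℕ) : (Q ^ k).trace = ∑ i, hH.eigenvalues i ^ k :=
    trace_pow_eq_sum_eigenvalues_pow hH k
  have hsum : ∑ i, hH.eigenvalues i = 0 := by simpa [hQ.2] using (htrace 1).symm
  obtain ⟨i, hi⟩ := Finite.exists_max hH.eigenvalues
  have hunit : unitVec (hH.eigenvectorBasis i) := by
    rw [unitVec, ← EuclideanSpace.real_norm_sq_eq, hH.eigenvectorBasis.norm_eq_one, one_pow]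
  refine ⟨_, hH.eigenvalues i, hunit, hH.mulVec_eigenvectorBasis i,
    nonneg_of_sum_eq_zero_of_forall_le hsum hi, ?_⟩
  rw [← pow_two, ← pow_succ, htrace, htrace]
  exact ⟨three_mul_sq_le_two_mul_sum_sq hsum i, sum_sq_le_six_mul_sq hsum hi,
    sum_cube_eq_of_sum_eq_zero hsum i⟩

lemma frob_sq (A : Mat3) : frob A ^ 2 = (Aᵀ * A).trace := by
  rw [frob, Real.sq_sqrt (by positivity), Finset.sum_comm]
  simp only [trace, diag_apply, mul_apply, transpose_apply, sq]

section Uniaxial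

variable {n : Fin 3 → ℝ}

lemma uniax_isSymm (s : ℝ) (n : Fin 3 → ℝ) : (uniax s n).IsSymm := by
  simp [Matrix.IsSymm, uniax, transpose_vecMulVec]

lemma uniax_mem_Sym0 (s : ℝ) (hn : unitVec n) : uniax s n ∈ Sym0 := by
  refine ⟨uniax_isSymm s n, ?_⟩
  simp [uniax, trace_vecMulVec, unitVec_iff_dotProduct_self.1 hn]

lemma trace_mul_uniax (s : ℝ) (n : Fin 3 → ℝ) (A : Mat3) :
    (A * uniax s n).trace = s * (n ⬝ᵥ A *ᵥ n - A.trace / 3) := by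
  simp only [uniax, Matrix.mul_smul, mul_sub, mul_one, mul_vecMulVec, trace_smul, trace_sub,
    trace_vecMulVec, dotProduct_comm _ n, smul_eq_mul]
  ring

lemma uniax_mulVec_self (s : ℝ) (hn : unitVec n) : uniax s n *ᵥ n = (2 / 3 * s) • n := by
  rw [unitVec_iff_dotProduct_self] at hn
  simp only [uniax, smul_mulVec, sub_mulVec, vecMulVec_mulVec, one_mulVec, hn, MulOpposite.op_one,
    one_smul]
  module

lemma trace_uniax_mul_uniax (s : ℝ) (hn : unitVec n) :
    (uniax s n * uniax s n).trace = 2 / 3 * s ^ 2 := by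
  rw [trace_mul_uniax, uniax_mulVec_self s hn, dotProduct_smul,
    unitVec_iff_dotProduct_self.1 hn, (uniax_mem_Sym0 s hn).2, smul_eq_mul]
  ring

lemma trace_uniax_mul_uniax_mul_uniax (s : ℝ) (hn : unitVec n) :
    (uniax s n * uniax s n * uniax s n).trace = 2 / 9 * s ^ 3 := by
  rw [trace_mul_uniax, ← mulVec_mulVec, uniax_mulVec_self s hn, mulVec_smul,
    uniax_mulVec_self s hn, smul_smul, dotProduct_smul, unitVec_iff_dotProduct_self.1 hn,
    trace_uniax_mul_uniax s hn, smul_eq_mul]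
  ring

lemma frob_sub_uniax_sq {Q : Mat3} (hQ : Q ∈ Sym0) (s : ℝ) (hn : unitVec n) :
    frob (Q - uniax s n) ^ 2 = (Q * Q).trace - 2 * s * (n ⬝ᵥ Q *ᵥ n) + 2 / 3 * s ^ 2 := by
  rw [frob_sq, (hQ.1.sub (uniax_isSymm s n)).eq, sub_mul, mul_sub, mul_sub, trace_sub, trace_sub,
    trace_sub, trace_mul_comm (uniax s n) Q, trace_mul_uniax, trace_uniax_mul_uniax s hn, hQ.2]
  ring

end Uniaxial

lemma distN_nonneg (s : ℝ) (Q : Mat3) : 0 ≤ distN s Q := by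
  apply Real.sInf_nonneg
  rintro _ ⟨P, -, rfl⟩
  exact Real.sqrt_nonneg _

lemma distN_le_frob_sub (s : ℝ) (Q : Mat3) {P : Mat3} (hP : P ∈ NsetM s) :
    distN s Q ≤ frob (Q - P) := by
  refine csInf_le ⟨0, ?_⟩ ⟨P, hP, rfl⟩
  rintro _ ⟨P', -, rfl⟩
  exact Real.sqrt_nonneg _

/-- The Landau–de Gennes energy of the uniaxial states with order parameter `s`, as a function
of `s` alone; see `fLdG_uniax`. -/
def uniaxialEnergy (a b c C s : ℝ) : ℝ :=
  C - a / 3 * s ^ 2 - 2 * b / 27 * s ^ 3 + c / 9 * s ^ 4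

lemma fLdG_uniax (a b c C s : ℝ) {n : Fin 3 → ℝ} (hn : unitVec n) :
    fLdG a b c C (uniax s n) = uniaxialEnergy a b c C s := by
  rw [fLdG, uniaxialEnergy, trace_uniax_mul_uniax s hn, trace_uniax_mul_uniax_mul_uniax s hn]
  ring

section Energy

variable {a b c s ρ σ : ℝ}

lemma fLdG_eq_uniaxialEnergy_add (a b c C : ℝ) {Q : Mat3}
    (hsq : (Q * Q).trace = 2 / 3 * ρ ^ 2)
    (hcube : (Q * Q * Q).trace = 8 / 9 * σ ^ 3 - 2 / 3 * σ * ρ ^ 2) :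
    fLdG a b c C Q =
      uniaxialEnergy a b c C ρ + 2 * b / 27 * ((ρ - σ) * (ρ + 2 * σ) ^ 2) := by
  rw [fLdG, uniaxialEnergy, hsq, hcube]
  ring

variable (C : ℝ)

lemma uniaxialEnergy_sub_of_critical (hcrit : 2 * c * s ^ 2 = b * s + 3 * a) (ρ : ℝ) :
    uniaxialEnergy a b c C ρ - uniaxialEnergy a b c C s =
      (ρ - s) ^ 2 / 27 * (3 * c * ρ ^ 2 + (3 * c * s - b) * (2 * ρ + s)) := by
  obtain rfl : a = (2 * c * s ^ 2 - b * s) / 3 := by linarith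
  simp only [uniaxialEnergy]
  ring

lemma uniaxialEnergy_quadratic_growth (hc : 0 ≤ c) (hbs : b ≤ 3 * c * s)
    (hcrit : 2 * c * s ^ 2 = b * s + 3 * a) (hρ : 0 ≤ ρ) :
    s * (3 * c * s - b) / 27 * (ρ - s) ^ 2 ≤
      uniaxialEnergy a b c C ρ - uniaxialEnergy a b c C s := by
  have hquad : s * (3 * c * s - b) ≤ 3 * c * ρ ^ 2 + (3 * c * s - b) * (2 * ρ + s) := by
    have : 0 ≤ 3 * c * ρ ^ 2 := by positivity
    have : 0 ≤ (3 * c * s - b) * (2 * ρ) := mul_nonneg (by linarith) (by linarith)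
    linarith
  rw [uniaxialEnergy_sub_of_critical C hcrit]
  calc s * (3 * c * s - b) / 27 * (ρ - s) ^ 2
      = (ρ - s) ^ 2 / 27 * (s * (3 * c * s - b)) := by ring
    _ ≤ _ := by gcongr

lemma sq_mul_sub_le (hs : 0 ≤ s) (hρσ : ρ ≤ 2 * σ) (hσρ : σ ≤ ρ) :
    s ^ 2 * (ρ - σ) ≤ s * (ρ - s) ^ 2 + (ρ - σ) * (ρ + 2 * σ) ^ 2 := by
  have hgap : 0 ≤ ρ - σ := sub_nonneg.2 hσρ
  rcases le_total s (2 * ρ) with hlarge | hsmall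
  · have hsq : s ^ 2 ≤ (ρ + 2 * σ) ^ 2 := pow_le_pow_left₀ hs (by linarith) 2
    calc s ^ 2 * (ρ - σ) ≤ (ρ + 2 * σ) ^ 2 * (ρ - σ) := mul_le_mul_of_nonneg_right hsq hgap
      _ ≤ s * (ρ - s) ^ 2 + (ρ - σ) * (ρ + 2 * σ) ^ 2 := by
        linarith [mul_nonneg hs (sq_nonneg (ρ - s))]
  · have hsq : (s / 2) ^ 2 ≤ (s - ρ) ^ 2 := pow_le_pow_left₀ (by linarith) (by linarith) 2
    calc s ^ 2 * (ρ - σ) ≤ s ^ 2 * (s / 4) := by gcongr; linarith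
      _ = s * (s / 2) ^ 2 := by ring
      _ ≤ s * (s - ρ) ^ 2 := by gcongr
      _ = s * (ρ - s) ^ 2 := by ring
      _ ≤ s * (ρ - s) ^ 2 + (ρ - σ) * (ρ + 2 * σ) ^ 2 :=
        le_add_of_nonneg_right (mul_nonneg hgap (sq_nonneg _))

lemma coercivity_in_order_parameters (hb : 0 ≤ b) (hc : 0 ≤ c) (hs : 0 ≤ s) (hbs : b ≤ 3 * c * s)
    (hcrit : 2 * c * s ^ 2 = b * s + 3 * a) (hρσ : ρ ≤ 2 * σ) (hσρ : σ ≤ ρ) :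
    s * min (3 * c * s - b) (3 * b) / 54 * (2 / 3 * ((ρ - s) ^ 2 + 2 * s * (ρ - σ))) ≤
      uniaxialEnergy a b c C ρ + 2 * b / 27 * ((ρ - σ) * (ρ + 2 * σ) ^ 2) -
        uniaxialEnergy a b c C s := by
  set m := min (3 * c * s - b) (3 * b)
  have hm : 0 ≤ m := le_min (by linarith) (by linarith)
  have hρ : 0 ≤ ρ := by linarith
  have : 0 ≤ ρ - σ := sub_nonneg.2 hσρ
  calc s * m / 54 * (2 / 3 * ((ρ - s) ^ 2 + 2 * s * (ρ - σ)))
      = m / 81 * (s * (ρ - s) ^ 2 + 2 * (s ^ 2 * (ρ - σ))) := by ring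
    _ ≤ m / 81 * (s * (ρ - s) ^ 2 + 2 * (s * (ρ - s) ^ 2 + (ρ - σ) * (ρ + 2 * σ) ^ 2)) := by
        refine mul_le_mul_of_nonneg_left ?_ (div_nonneg hm (by norm_num))
        linarith [sq_mul_sub_le hs hρσ hσρ]
    _ = m * (s / 27 * (ρ - s) ^ 2) + m * (2 / 81 * ((ρ - σ) * (ρ + 2 * σ) ^ 2)) := by ring
    _ ≤ (3 * c * s - b) * (s / 27 * (ρ - s) ^ 2) +
          3 * b * (2 / 81 * ((ρ - σ) * (ρ + 2 * σ) ^ 2)) := by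
        gcongr
        · exact min_le_left _ _
        · exact min_le_right _ _
    _ = s * (3 * c * s - b) / 27 * (ρ - s) ^ 2 +
          2 * b / 27 * ((ρ - σ) * (ρ + 2 * σ) ^ 2) := by ring
    _ ≤ _ := by linarith [uniaxialEnergy_quadratic_growth C hc hbs hcrit hρ]

theorem mul_distN_sq_le_fLdG_sub (hb : 0 ≤ b) (hc : 0 ≤ c) (hs : 0 ≤ s) (hbs : b ≤ 3 * c * s)
    (hcrit : 2 * c * s ^ 2 = b * s + 3 * a) {Q : Mat3} (hQ : Q ∈ Sym0) :
    s * min (3 * c * s - b) (3 * b) / 54 * distN s Q ^ 2 ≤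
      fLdG a b c C Q - uniaxialEnergy a b c C s := by
  obtain ⟨n, μ, hn, hμ, hμ0, hle, hge, hcube⟩ := exists_leading_eigenvector hQ
  obtain ⟨σ, rfl⟩ : ∃ σ, μ = 2 / 3 * σ := ⟨3 / 2 * μ, by ring⟩
  obtain ⟨ρ, hρ, hsq⟩ : ∃ ρ, 0 ≤ ρ ∧ (Q * Q).trace = 2 / 3 * ρ ^ 2 := by
    refine ⟨√(3 / 2 * (Q * Q).trace), Real.sqrt_nonneg _, ?_⟩
    rw [Real.sq_sqrt (by linarith [sq_nonneg (2 / 3 * σ)])]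
    ring
  have hρσ : ρ ≤ 2 * σ := (sq_le_sq₀ hρ (by linarith)).1 (by linarith)
  have hσρ : σ ≤ ρ := (sq_le_sq₀ (by linarith) hρ).1 (by linarith)
  have hdist : distN s Q ^ 2 ≤ 2 / 3 * ((ρ - s) ^ 2 + 2 * s * (ρ - σ)) :=
    calc distN s Q ^ 2 ≤ frob (Q - uniax s n) ^ 2 :=
          pow_le_pow_left₀ (distN_nonneg s Q) (distN_le_frob_sub s Q ⟨n, hn, rfl⟩) 2
      _ = _ := by
          rw [frob_sub_uniax_sq hQ s hn, hsq, hμ, dotProduct_smul,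
            unitVec_iff_dotProduct_self.1 hn, smul_eq_mul]
          ring
  have hγ : 0 ≤ s * min (3 * c * s - b) (3 * b) / 54 :=
    div_nonneg (mul_nonneg hs (le_min (by linarith) (by linarith))) (by norm_num)
  rw [fLdG_eq_uniaxialEnergy_add a b c C hsq (σ := σ) (by rw [hcube, hsq]; ring)]
  exact (mul_le_mul_of_nonneg_left hdist hγ).trans
    (coercivity_in_order_parameters C hb hc hs hbs hcrit hρσ hσρ)

end Energy

section SStar

variable {a b c : ℝ}

lemma four_mul_mul_sStar (a b : ℝ) (hc : c ≠ 0) :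
    4 * c * sStar a b c = b + √(b ^ 2 + 24 * a * c) := by
  rw [sStar]
  field_simp

lemma sStar_pos (hb : 0 < b) (hc : 0 < c) : 0 < sStar a b c := by
  unfold sStar
  positivity

lemma sStar_critical (hc : c ≠ 0) (hdisc : 0 ≤ b ^ 2 + 24 * a * c) :
    2 * c * sStar a b c ^ 2 = b * sStar a b c + 3 * a := by
  have hsqrt : √(b ^ 2 + 24 * a * c) = 4 * c * sStar a b c - b := by
    rw [four_mul_mul_sStar a b hc]; ring
  have hsq := Real.sq_sqrt hdisc
  rw [hsqrt] at hsq
  apply mul_left_cancel₀ (mul_ne_zero (by norm_num : (8 : ℝ) ≠ 0) hc)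
  linear_combination hsq

lemma lt_three_mul_sStar (hb : 0 ≤ b) (hc : 0 < c) (hdisc : 0 < b ^ 2 + 27 * a * c) :
    b < 3 * c * sStar a b c := by
  have hsqrt : b / 3 < √(b ^ 2 + 24 * a * c) := by
    rw [Real.lt_sqrt (by positivity)]
    linarith
  linarith [four_mul_mul_sStar a b hc.ne']

end SStar

theorem statement1_general (a b c C : ℝ) (hb : 0 < b) (hc : 0 < c)
    (hdisc : 0 < b ^ 2 + 27 * a * c) (hC : IsLeast (fLdG a b c C '' Sym0) 0) :
    ∃ γ₁ > (0 : ℝ), ∀ Q ∈ Sym0, γ₁ * (distN (sStar a b c) Q) ^ 2 ≤ fLdG a b c C Q := by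
  set s := sStar a b c
  have hs : 0 < s := sStar_pos hb hc
  have hbs : b < 3 * c * s := lt_three_mul_sStar hb.le hc hdisc
  have hcrit : 2 * c * s ^ 2 = b * s + 3 * a :=
    sStar_critical hc.ne' (by linarith [sq_nonneg b])
  have hmin : 0 ≤ uniaxialEnergy a b c C s := by
    have hn : unitVec (Pi.single 0 1) := by simp [unitVec_iff_dotProduct_self]
    rw [← fLdG_uniax a b c C s hn]
    exact hC.2 ⟨_, uniax_mem_Sym0 s hn, rfl⟩
  have hγ : 0 < min (3 * c * s - b) (3 * b) := lt_min (by linarith) (by linarith)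
  refine ⟨s * min (3 * c * s - b) (3 * b) / 54, div_pos (mul_pos hs hγ) (by norm_num), ?_⟩
  intro Q hQ
  linarith [mul_distN_sq_le_fLdG_sub C hb.le hc.le hs.le hbs.le hcrit hQ]

theorem statement1 (a b c C : ℝ) (ha : 0 < a) (hb : 0 < b) (hc : 0 < c)
    (hC : IsLeast (fLdG a b c C '' Sym0) 0) :
    ∃ δ₀ > (0 : ℝ), ∃ γ₁ > (0 : ℝ), ∀ Q ∈ Sym0,
      distN (sStar a b c) Q ≤ δ₀ →
        γ₁ * (distN (sStar a b c) Q) ^ 2 ≤ fLdG a b c C Q := by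
  obtain ⟨γ₁, hγ₁, hbound⟩ := statement1_general a b c C hb hc (by positivity) hC
  exact ⟨1, one_pos, γ₁, hγ₁, fun Q hQ _ ↦ hbound Q hQ⟩
end
end

section
/- Let s* > 0 and let Q ∈ Sym₀ have a simple largest eigenvalue, with n a unit eigenvector for the largest eigenvalue. Then R(Q) := s*( n⊗n − (1/3)I ) is the unique nearest point of 𝒩 to Q in the Frobenius distance: for every P ∈ 𝒩 with P ≠ R(Q) one has |Q − R(Q)| < |Q − P|. -/
/- STATEMENT 5: Let s* > 0 and let Q ∈ Sym₀ have a simple largest eigenvalue, with n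
a unit eigenvector for the largest eigenvalue. Then R(Q) = s*(n⊗n − (1/3)I) is the
unique nearest point of 𝒩 to Q in Frobenius distance: for every P ∈ 𝒩 with P ≠ R(Q),
|Q − R(Q)| < |Q − P|. -/

noncomputable section

open Matrix

def IsEigen (Q : Mat3) (μ : ℝ) (v : Fin 3 → ℝ) : Prop := Q.mulVec v = μ • v

/-- `n` is a unit eigenvector of `Q` for the largest eigenvalue `lam`. -/
def MaxEigen (Q : Mat3) (lam : ℝ) (n : Fin 3 → ℝ) : Prop :=
  unitVec n ∧ IsEigen Q lam n ∧
    ∀ (μ : ℝ) (v : Fin 3 → ℝ), v ≠ 0 → IsEigen Q μ v → μ ≤ lam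

/-- The largest eigenvalue `lam` of `Q` is simple, with unit eigenvector `n`. -/
def SimpleMaxEigen (Q : Mat3) (lam : ℝ) (n : Fin 3 → ℝ) : Prop :=
  MaxEigen Q lam n ∧ ∀ v : Fin 3 → ℝ, IsEigen Q lam v → ∃ t : ℝ, v = t • n

/-!
For a unit vector `v`, the squared Frobenius distance from `A` to `s (v v* - c I)` equals a constant
independent of `v` minus `2 s ⟨v, A v⟩`. Minimising the distance therefore means maximising the
Rayleigh quotient, whose maximisers on the unit sphere are exactly the unit eigenvectors for the
largest eigenvalue. When this eigenvalue is simple, they differ only by a phase, which `v v*` does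
not see.
-/

open scoped ComplexOrder Matrix.Norms.Frobenius

section Frobenius

variable {𝕜 ι κ : Type*} [RCLike 𝕜] [Fintype ι] [Fintype κ]

lemma frobenius_norm_sq (A : Matrix ι κ 𝕜) : ‖A‖ ^ 2 = ∑ i, ∑ j, ‖A i j‖ ^ 2 := by
  have h_nonneg : 0 ≤ ∑ i, ∑ j, ‖A i j‖ ^ 2 := by positivity
  simp only [frobenius_norm_def, Real.rpow_two, ← Real.sqrt_eq_rpow, Real.sq_sqrt h_nonneg]

lemma re_star_dotProduct_self (v : ι → 𝕜) : RCLike.re (star v ⬝ᵥ v) = ∑ i, ‖v i‖ ^ 2 := by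
  simp only [dotProduct, Pi.star_apply, RCLike.star_def, RCLike.conj_mul, map_sum,
    ← RCLike.ofReal_pow, RCLike.ofReal_re]

lemma norm_sub_mul_star_sq (a x y : 𝕜) :
    ‖a - x * star y‖ ^ 2 = ‖a‖ ^ 2 - 2 * RCLike.re (star x * (a * y)) + ‖x‖ ^ 2 * ‖y‖ ^ 2 := by
  have h_inner : inner 𝕜 (x * star y) a = star x * (a * y) := by
    simp only [RCLike.inner_apply, RCLike.star_def, map_mul, RCLike.conj_conj]
    ring
  rw [norm_sub_sq (𝕜 := 𝕜), inner_re_symm, h_inner, norm_mul, norm_star, mul_pow]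

lemma frobenius_norm_sub_vecMulVec_star_sq (A : Matrix ι κ 𝕜) (u : ι → 𝕜) (w : κ → 𝕜) :
    ‖A - vecMulVec u (star w)‖ ^ 2 =
      ‖A‖ ^ 2 - 2 * RCLike.re (star u ⬝ᵥ A *ᵥ w) +
        RCLike.re (star u ⬝ᵥ u) * RCLike.re (star w ⬝ᵥ w) := by
  rw [re_star_dotProduct_self, re_star_dotProduct_self, Finset.sum_mul_sum]
  simp only [frobenius_norm_sq, Matrix.sub_apply, vecMulVec_apply, Pi.star_apply,
    norm_sub_mul_star_sq, dotProduct, mulVec, Finset.mul_sum, Finset.sum_add_distrib,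
    Finset.sum_sub_distrib, map_sum]

end Frobenius

section Rayleigh

variable {𝕜 ι : Type*} [RCLike 𝕜] [Fintype ι] {A : Matrix ι ι 𝕜} {lam : ℝ}

lemma posSemidef_smul_one_sub_of_eigenvalues_le [DecidableEq ι] (hA : A.IsHermitian)
    (hmax : ∀ (μ : ℝ) (v : ι → 𝕜), v ≠ 0 → A *ᵥ v = μ • v → μ ≤ lam) :
    (lam • (1 : Matrix ι ι 𝕜) - A).PosSemidef := by
  have hB : (lam • (1 : Matrix ι ι 𝕜) - A).IsHermitian := by
    simp [IsHermitian, hA.eq]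
  refine hB.posSemidef_iff_eigenvalues_nonneg.2 fun i ↦ ?_
  have h_ne : (hB.eigenvectorBasis i).ofLp ≠ 0 := by
    simpa using hB.eigenvectorBasis.orthonormal.ne_zero i
  have h_eig : A *ᵥ (hB.eigenvectorBasis i).ofLp =
      (lam - hB.eigenvalues i) • (hB.eigenvectorBasis i).ofLp := by
    rw [sub_smul, ← hB.mulVec_eigenvectorBasis i, sub_mulVec, smul_mulVec, one_mulVec,
      sub_sub_cancel]
  exact sub_le_self_iff lam |>.1 (hmax _ _ h_ne h_eig)

lemma re_star_dotProduct_mulVec_lt_of_mulVec_ne (hA : A.IsHermitian)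
    (hmax : ∀ (μ : ℝ) (v : ι → 𝕜), v ≠ 0 → A *ᵥ v = μ • v → μ ≤ lam)
    {v : ι → 𝕜} (hv : star v ⬝ᵥ v = 1) (hne : A *ᵥ v ≠ lam • v) :
    RCLike.re (star v ⬝ᵥ A *ᵥ v) < lam := by
  classical
  have hB := posSemidef_smul_one_sub_of_eigenvalues_le hA hmax
  have h_mulVec : (lam • (1 : Matrix ι ι 𝕜) - A) *ᵥ v = lam • v - A *ᵥ v := by
    rw [sub_mulVec, smul_mulVec, one_mulVec]
  have h_ne : star v ⬝ᵥ (lam • (1 : Matrix ι ι 𝕜) - A) *ᵥ v ≠ 0 := by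
    rwa [Ne, hB.dotProduct_mulVec_zero_iff, h_mulVec, sub_eq_zero, eq_comm]
  have h_pos := (RCLike.pos_iff.1 ((hB.dotProduct_mulVec_nonneg v).lt_of_ne' h_ne)).1
  rw [h_mulVec, dotProduct_sub, dotProduct_smul, hv, map_sub, RCLike.smul_re, RCLike.one_re,
    mul_one] at h_pos
  exact sub_pos.1 h_pos

end Rayleigh

section NearestPoint

variable {𝕜 ι : Type*} [RCLike 𝕜] [DecidableEq ι]

/-- The matrix `s (v v* - c I)`, which is `uniax s v` for real `3 × 3` matrices and `c = 1 / 3`. -/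
def shiftedProjector (s c : ℝ) (v : ι → 𝕜) : Matrix ι ι 𝕜 :=
  s • (vecMulVec v (star v) - c • 1)

lemma shiftedProjector_smul_of_mul_star_eq_one (s c : ℝ) {t : 𝕜} (ht : t * star t = 1)
    (v : ι → 𝕜) : shiftedProjector s c (t • v) = shiftedProjector s c v := by
  rw [shiftedProjector, star_smul, smul_vecMulVec, vecMulVec_smul, smul_smul, ht, one_smul,
    shiftedProjector]

variable [Fintype ι]

lemma frobenius_norm_sub_shiftedProjector_sq (A : Matrix ι ι 𝕜) (s c : ℝ) {v : ι → 𝕜}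
    (hv : star v ⬝ᵥ v = 1) :
    ‖A - shiftedProjector s c v‖ ^ 2 =
      ‖A + (s * c) • (1 : Matrix ι ι 𝕜)‖ ^ 2 -
        2 * s * (RCLike.re (star v ⬝ᵥ A *ᵥ v) + s * c) + s ^ 2 := by
  have h_shift : A - shiftedProjector s c v =
      (A + (s * c) • (1 : Matrix ι ι 𝕜)) - vecMulVec (s • v) (star v) := by
    rw [shiftedProjector, smul_sub, smul_smul, smul_vecMulVec]
    abel
  have h_inner : RCLike.re (star (s • v) ⬝ᵥ (A + (s * c) • (1 : Matrix ι ι 𝕜)) *ᵥ v) =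
      s * (RCLike.re (star v ⬝ᵥ A *ᵥ v) + s * c) := by
    rw [add_mulVec, smul_mulVec, one_mulVec, star_smul, star_trivial, smul_dotProduct,
      dotProduct_add, dotProduct_smul, hv, RCLike.smul_re, map_add, RCLike.smul_re, RCLike.one_re,
      mul_one]
  have h_norm : RCLike.re (star (s • v) ⬝ᵥ (s • v)) = s ^ 2 := by
    simp [hv, RCLike.smul_re, star_smul, sq]
  rw [h_shift, frobenius_norm_sub_vecMulVec_star_sq, h_inner, h_norm, hv, RCLike.one_re]
  ring

theorem statement5_general {s : ℝ} (hs : 0 < s) (c : ℝ) {A : Matrix ι ι 𝕜} (hA : A.IsHermitian)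
    {lam : ℝ} {n : ι → 𝕜} (hn : star n ⬝ᵥ n = 1) (hAn : A *ᵥ n = lam • n)
    (hmax : ∀ (μ : ℝ) (v : ι → 𝕜), v ≠ 0 → A *ᵥ v = μ • v → μ ≤ lam)
    (hsimple : ∀ v : ι → 𝕜, A *ᵥ v = lam • v → ∃ t : 𝕜, v = t • n)
    {v : ι → 𝕜} (hv : star v ⬝ᵥ v = 1) (hne : shiftedProjector s c v ≠ shiftedProjector s c n) :
    ‖A - shiftedProjector s c n‖ < ‖A - shiftedProjector s c v‖ := by
  have hAv : A *ᵥ v ≠ lam • v := by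
    intro hAv
    obtain ⟨t, rfl⟩ := hsimple v hAv
    have ht : t * star t = 1 := by simpa [hn] using hv
    exact hne (shiftedProjector_smul_of_mul_star_eq_one s c ht n)
  have h_rayleigh_n : RCLike.re (star n ⬝ᵥ A *ᵥ n) = lam := by
    rw [hAn, dotProduct_smul, hn, RCLike.smul_re, RCLike.one_re, mul_one]
  have h_rayleigh_v : RCLike.re (star v ⬝ᵥ A *ᵥ v) < lam :=
    re_star_dotProduct_mulVec_lt_of_mulVec_ne hA hmax hv hAv
  refine lt_of_pow_lt_pow_left₀ 2 (norm_nonneg _) ?_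
  rw [frobenius_norm_sub_shiftedProjector_sq A s c hn,
    frobenius_norm_sub_shiftedProjector_sq A s c hv, h_rayleigh_n]
  gcongr

end NearestPoint

lemma frob_eq_norm (A : Mat3) : frob A = ‖A‖ := by
  rw [frob, Real.sqrt_eq_iff_eq_sq (by positivity) (norm_nonneg A), frobenius_norm_sq]
  simp only [Real.norm_eq_abs, sq_abs]

lemma unitVec_iff_star_dotProduct_self {v : Fin 3 → ℝ} : unitVec v ↔ star v ⬝ᵥ v = 1 := by
  simp only [unitVec, star_trivial, dotProduct, sq]

theorem statement5 (sS : ℝ) (hs : 0 < sS) (Q : Mat3) (hQ : Q ∈ Sym0)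
    (lam : ℝ) (n : Fin 3 → ℝ) (h : SimpleMaxEigen Q lam n) :
    ∀ P ∈ NsetM sS, P ≠ uniax sS n → frob (Q - uniax sS n) < frob (Q - P) := by
  rintro _ ⟨v, hv, rfl⟩ hne
  obtain ⟨⟨hn, hQn, hmax⟩, hsimple⟩ := h
  rw [frob_eq_norm, frob_eq_norm]
  exact statement5_general hs (1 / 3) (isHermitian_iff_isSymm.2 hQ.1)
    (unitVec_iff_star_dotProduct_self.1 hn) hQn hmax hsimple
    (unitVec_iff_star_dotProduct_self.1 hv) hne
end
end
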